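/- Let G be a finite unweighted graph without isolated vertices, let c_k be the k-th min-max eigenvalue of the signless 1-Laplacian Δ₁⁺, and let λ₁ ≤ ⋯ ≤ λ_n be the eigenvalues of the normalized Laplacian Δ₂. Then for every k = 1,…,n: c_k²/2 ≤ 2 − λ_{n−k+1} ≤ 2·c_k. -/

import Mathlib

open Finset

noncomputable section

/-- The set-valued sign function: `{1}` if `t > 0`, `{-1}` if `t < 0`, `[-1,1]` if `t = 0`. -/
def Sgn (t : ℝ) : Set ℝ := if 0 < t then {1} else if t < 0 then {-1} else Set.Icc (-1) 1

variable {n : ℕ}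

/-- The degree `d_i` of vertex `i` (unit edge weights), as a real number. -/
def degR (G : SimpleGraph (Fin n)) [DecidableRel G.Adj] (i : Fin n) : ℝ := (G.degree i : ℝ)

/-- `vol(V) = Σ_i d_i`. -/
def volV (G : SimpleGraph (Fin n)) [DecidableRel G.Adj] : ℝ := ∑ i, degR G i

/-- `I⁺(x) = Σ_{{i,j} ∈ E} |x_i + x_j|`. -/
def IplusU (G : SimpleGraph (Fin n)) [DecidableRel G.Adj] (x : Fin n → ℝ) : ℝ :=
  (∑ i, ∑ j, if G.Adj i j then |x i + x j| else 0) / 2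

/-- `(λ, x)` with `x ≠ 0` is an eigenpair of the signless 1-Laplacian `Δ₁⁺`:
there are `z_{ij} ∈ Sgn(x_i + x_j)` with `z_{ij} = z_{ji}` and `v_i ∈ Sgn(x_i)` such that
`Σ_{j ∼ i} z_{ij} = λ d_i v_i` for all `i`. -/
def IsEigenSignless (G : SimpleGraph (Fin n)) [DecidableRel G.Adj]
    (lam : ℝ) (x : Fin n → ℝ) : Prop :=
  x ≠ 0 ∧ ∃ z : Fin n → Fin n → ℝ,
    (∀ i j, G.Adj i j → z i j ∈ Sgn (x i + x j)) ∧
    (∀ i j, z i j = z j i) ∧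
    ∃ v : Fin n → ℝ, (∀ i, v i ∈ Sgn (x i)) ∧
      ∀ i, (∑ j, if G.Adj i j then z i j else 0) = lam * degR G i * v i

/-- `D` is the vertex set of a connected component of the subgraph of `G` induced by `P`. -/
def IsCompIn (G : SimpleGraph (Fin n)) (P : Set (Fin n)) (D : Set (Fin n)) : Prop :=
  ∃ v ∈ P, D = {u | Relation.ReflTransGen (fun a b => G.Adj a b ∧ a ∈ P ∧ b ∈ P) v u}

/-- The number `S(x)` of nodal domains of `x`: connected components of the support. -/
def nodalCount (G : SimpleGraph (Fin n)) (x : Fin n → ℝ) : ℕ :=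
  Set.ncard {D : Set (Fin n) | IsCompIn G {i | x i ≠ 0} D}

/-- There is a continuous odd nonvanishing map from `A` into `ℝᵐ ∖ {0}`. -/
def HasOddMap (A : Set (Fin n → ℝ)) (m : ℕ) : Prop :=
  ∃ f : (Fin n → ℝ) → (Fin m → ℝ),
    ContinuousOn f A ∧ (∀ x ∈ A, f (-x) = -f x) ∧ ∀ x ∈ A, f x ≠ 0

/-- `γ(A) ≥ k`, where `γ` is the Krasnoselskii genus: the least `m` admitting a
continuous odd nonvanishing map `A → ℝᵐ ∖ {0}` (with `γ(∅) = 0`, `γ(A) = +∞` if none). -/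
def GenusGe (A : Set (Fin n → ℝ)) (k : ℕ) : Prop := ∀ m, HasOddMap A m → k ≤ m

/-- The `k`-th min-max value of a functional `Φ`:
`inf { sup_{x ∈ A} Φ(x) : A ⊆ ℝⁿ∖{0} symmetric compact, γ(A) ≥ k }`. -/
def minimaxVal (Phi : (Fin n → ℝ) → ℝ) (k : ℕ) : ℝ :=
  sInf {r : ℝ | ∃ A : Set (Fin n → ℝ), IsCompact A ∧ (∀ x ∈ A, -x ∈ A) ∧
    (0 : Fin n → ℝ) ∉ A ∧ GenusGe A k ∧ r = sSup (Phi '' A)}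

/-- The Rayleigh quotient `I⁺(x) / Σ_i d_i |x_i|` of the signless 1-Laplacian. -/
def RayleighPlus (G : SimpleGraph (Fin n)) [DecidableRel G.Adj] (x : Fin n → ℝ) : ℝ :=
  IplusU G x / ∑ i, degR G i * |x i|

/-- The `k`-th min-max eigenvalue `c_k` of the (normalized) signless 1-Laplacian `Δ₁⁺`. -/
def ckSignless (G : SimpleGraph (Fin n)) [DecidableRel G.Adj] (k : ℕ) : ℝ :=
  minimaxVal (RayleighPlus G) k

/-- The normalized Laplacian `Δ₂ = I − D^{-1/2} A D^{-1/2}`. -/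
def normLap (G : SimpleGraph (Fin n)) [DecidableRel G.Adj] : Matrix (Fin n) (Fin n) ℝ :=
  1 - Matrix.of fun i j =>
    (if G.Adj i j then (1 : ℝ) else 0) / (Real.sqrt (degR G i) * Real.sqrt (degR G j))

theorem bu_odd_root (p : Polynomial ℝ) (hm : p.Monic) (hodd : Odd p.natDegree) : ∃ x, p.IsRoot x := by
  have hpos : 0 < p.natDegree := hodd.pos
  have h1 : Filter.Tendsto (fun x => p.eval x) Filter.atTop Filter.atTop :=
    p.tendsto_atTop_of_leadingCoeff_nonneg (Polynomial.natDegree_pos_iff_degree_pos.mp hpos)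
      (by rw [hm.leadingCoeff]; norm_num)
  have h2 : Filter.Tendsto (fun x => (p.comp (-Polynomial.X)).eval x) Filter.atTop Filter.atBot := by
    apply Polynomial.tendsto_atBot_of_leadingCoeff_nonpos
    · rw [← Polynomial.natDegree_pos_iff_degree_pos, Polynomial.natDegree_comp]
      simpa using hpos
    · rw [Polynomial.leadingCoeff_comp (by simp)]
      simp [hm.leadingCoeff, hodd.neg_one_pow]
  obtain ⟨a, ha⟩ := (h1.eventually (Filter.eventually_ge_atTop 0)).exists
  obtain ⟨b, hb⟩ := (h2.eventually (Filter.eventually_le_atBot 0)).exists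
  have hb' : p.eval (-b) ≤ 0 := by simpa using hb
  obtain ⟨x, hx⟩ := mem_range_of_exists_le_of_exists_ge p.continuous ⟨_, hb'⟩ ⟨_, ha⟩
  exact ⟨x, hx⟩

theorem bu_eig {V : Type*} [AddCommGroup V] [Module ℝ V] [FiniteDimensional ℝ V]
    (hV : Odd (Module.finrank ℝ V)) (T : Module.End ℝ V) : ∃ c, T.HasEigenvalue c := by
  obtain ⟨x, hx⟩ := bu_odd_root T.charpoly T.charpoly_monic (by rwa [LinearMap.charpoly_natDegree])
  exact ⟨x, (Module.End.hasEigenvalue_iff_isRoot_charpoly T x).2 hx⟩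

theorem bu_common (N : ℕ) : ∀ {V : Type*} [AddCommGroup V] [Module ℝ V] [FiniteDimensional ℝ V],
    Module.finrank ℝ V = N → Odd N → ∀ S : Set (Module.End ℝ V),
    (∀ T ∈ S, ∀ U ∈ S, ∀ x, T (U x) = U (T x)) →
    ∃ v : V, v ≠ 0 ∧ ∀ T ∈ S, ∃ c : ℝ, T v = c • v := by
  induction N using Nat.strong_induction_on with
  | _ N ih =>
  intro V _ _ _ hN hodd S hS
  by_cases hsc : ∀ T ∈ S, ∃ c : ℝ, ∀ v, T v = c • v
  · have : Nontrivial V := Module.nontrivial_of_finrank_pos (R := ℝ) (by rw [hN]; exact hodd.pos)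
    obtain ⟨v, hv⟩ := exists_ne (0 : V)
    exact ⟨v, hv, fun T hT => (hsc T hT).imp fun c h => h v⟩
  push Not at hsc
  obtain ⟨T, hT, hns⟩ := hsc
  obtain ⟨c, hc⟩ := bu_eig (hN ▸ hodd) T
  let W : Module.End ℝ V := T - algebraMap ℝ _ c
  have hW : ∀ x, W x = T x - c • x := fun x => by simp [W, Module.algebraMap_end_apply]
  have hcomm : ∀ U ∈ S, ∀ x, U (W x) = W (U x) := by
    intro U hU x
    rw [hW, hW, map_sub, map_smul, hS U hU T hT]
  have hrk := LinearMap.finrank_range_add_finrank_ker W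
  have hker : 0 < Module.finrank ℝ (LinearMap.ker W) := by
    obtain ⟨v, hv⟩ := hc.exists_hasEigenvector
    rw [Module.finrank_pos_iff_exists_ne_zero]
    refine ⟨⟨v, ?_⟩, ?_⟩
    · rw [LinearMap.mem_ker, hW, hv.apply_eq_smul, sub_self]
    · intro h; exact hv.2 (congrArg Subtype.val h)
  have hran : 0 < Module.finrank ℝ (LinearMap.range W) := by
    obtain ⟨v, hv⟩ := hns c
    rw [Module.finrank_pos_iff_exists_ne_zero]
    refine ⟨⟨W v, LinearMap.mem_range_self _ _⟩, ?_⟩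
    intro h
    have := congrArg Subtype.val h
    simp only [hW] at this
    exact hv (sub_eq_zero.1 this)
  have key : ∀ p : Submodule ℝ V, Module.finrank ℝ p < N → Odd (Module.finrank ℝ p) →
      (∀ U ∈ S, ∀ x ∈ p, U x ∈ p) → ∃ v : V, v ≠ 0 ∧ ∀ T ∈ S, ∃ c : ℝ, T v = c • v := by
    intro p hp hpo hinv
    obtain ⟨v, hv, hv'⟩ := ih _ hp (V := p) rfl hpo
      {T' | ∃ U ∈ S, ∀ x : p, (T' x : V) = U x} (by
        rintro A ⟨U, hU, hA⟩ B ⟨U', hU', hB⟩ x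
        apply Subtype.ext
        rw [hA, hB, hB, hA, hS U hU U' hU'])
    refine ⟨v, fun h => hv (Subtype.ext h), fun U hU => ?_⟩
    obtain ⟨c, hc⟩ := hv' (U.restrict (hinv U hU)) ⟨U, hU, fun x => rfl⟩
    exact ⟨c, congrArg Subtype.val hc⟩
  rw [hN] at hrk
  rcases Nat.even_or_odd (Module.finrank ℝ (LinearMap.ker W)) with h | h
  · refine key (LinearMap.range W) (by omega) ?_ ?_
    · rw [← hrk] at hodd
      by_contra h'
      rw [Nat.not_odd_iff_even] at h'
      exact (Nat.not_odd_iff_even.2 (h'.add h)) hodd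
    · rintro U hU _ ⟨y, rfl⟩
      exact ⟨U y, (hcomm U hU y).symm⟩
  · refine key (LinearMap.ker W) (by omega) h ?_
    intro U hU x hx
    rw [LinearMap.mem_ker] at hx ⊢
    rw [← hcomm U hU, hx, map_zero]

/-- A commutative real algebra of odd dimension has a real point. -/
theorem bu_point {B : Type*} [CommRing B] [Algebra ℝ B] (hB : Odd (Module.finrank ℝ B)) :
    Nonempty (B →ₐ[ℝ] ℝ) := by
  have : FiniteDimensional ℝ B := Module.finite_of_finrank_pos hB.pos
  obtain ⟨v, hv, h⟩ := bu_common _ (V := B) rfl hB (Set.range (LinearMap.mulLeft ℝ)) (by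
    rintro _ ⟨a, rfl⟩ _ ⟨b, rfl⟩ x
    simp [mul_left_comm])
  choose c hc using fun a : B => h _ ⟨a, rfl⟩
  simp only [LinearMap.mulLeft_apply] at hc
  have inj : ∀ a b : ℝ, a • v = b • v → a = b := fun a b h => smul_left_injective ℝ hv h
  exact ⟨AlgHom.ofLinearMap
    { toFun := c
      map_add' := fun a b => inj _ _ (by rw [← hc, add_mul, hc, hc, add_smul])
      map_smul' := fun r b => inj _ _ (by rw [← hc, smul_mul_assoc, hc, smul_smul]; rfl) }
    (inj _ _ (by change c 1 • v = _; rw [← hc, one_mul, one_smul]))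
    (fun a b => inj _ _ (by
      change c (a * b) • v = (c a * c b) • v
      rw [← hc, mul_assoc, hc b, mul_smul_comm, hc a, smul_smul, mul_comm]))⟩

section BU
open MvPolynomial

/-- Polynomials all of whose monomials have degree `< N`. -/
def buLow {ι : Type} (N : ℕ) : Submodule ℝ (MvPolynomial ι ℝ) where
  carrier := {p | ∀ s : ι →₀ ℕ, N ≤ s.degree → coeff s p = 0}
  add_mem' := by
    intro p q hp hq s hs
    rw [coeff_add, hp s hs, hq s hs, add_zero]
  zero_mem' := by intro s _; simp
  smul_mem' := by
    intro c p hp s hs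
    rw [coeff_smul, hp s hs, smul_zero]

theorem buLow_mul {ι : Type} {M N : ℕ} {p q : MvPolynomial ι ℝ}
    (hp : p ∈ buLow M) (hq : q ∈ buLow (N + 1)) : p * q ∈ buLow (M + N) := by
  classical
  intro s hs
  rw [coeff_mul]
  refine Finset.sum_eq_zero fun x hx => ?_
  rw [HasAntidiagonal.mem_antidiagonal] at hx
  rw [← hx, map_add] at hs
  by_cases h : M ≤ x.1.degree
  · rw [hp _ h, zero_mul]
  · rw [hq _ (by omega), mul_zero]

theorem buLow_mono {ι : Type} {M N : ℕ} (h : M ≤ N) {p : MvPolynomial ι ℝ}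
    (hp : p ∈ buLow M) : p ∈ buLow N := fun s hs => hp s (h.trans hs)

theorem buLow_monomial {ι : Type} (s : ι →₀ ℕ) (c : ℝ) : monomial s c ∈ buLow (s.degree + 1) := by
  classical
  intro t ht
  rw [coeff_monomial, if_neg]
  rintro rfl
  omega

theorem buLow_of_totalDegree {ι : Type} {N : ℕ} {p : MvPolynomial ι ℝ} (h : p.totalDegree < N) :
    p ∈ buLow N := by
  intro s hs
  apply coeff_eq_zero_of_totalDegree_lt
  exact lt_of_lt_of_le h hs

/-- `p` has leading monomial `a`, with all other monomials of smaller degree. -/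
def buLead {ι : Type} (p : MvPolynomial ι ℝ) (a : ι →₀ ℕ) : Prop :=
  p - monomial a 1 ∈ buLow a.degree

theorem buLead_mul {ι : Type} {p q : MvPolynomial ι ℝ} {a b : ι →₀ ℕ} (hp : buLead p a)
    (hq : buLead q b) : buLead (p * q) (a + b) := by
  unfold buLead at *
  have hq' : q ∈ buLow (b.degree + 1) := by
    have := (buLow (ι := ι) (b.degree + 1)).add_mem (buLow_mono (Nat.le_succ _) hq)
      (buLow_monomial b 1)
    simpa using this
  have e : p * q - monomial (a + b) 1 = (p - monomial a 1) * q
      + (q - monomial b 1) * monomial a 1 := by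
    have : (monomial (a + b) (1 : ℝ)) = monomial a 1 * monomial b 1 := by
      rw [monomial_mul, one_mul]
    rw [this]; ring
  rw [e, map_add]
  refine add_mem (buLow_mul hp hq') ?_
  rw [add_comm]
  exact buLow_mul hq (buLow_monomial a 1)

theorem buLead_one {ι : Type} : buLead (1 : MvPolynomial ι ℝ) 0 := by
  unfold buLead
  have : (monomial (0 : ι →₀ ℕ) (1 : ℝ)) = 1 := rfl
  rw [this, sub_self]
  exact zero_mem _

theorem buLead_pow {ι : Type} {p : MvPolynomial ι ℝ} {a : ι →₀ ℕ} (hp : buLead p a) (m : ℕ) :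
    buLead (p ^ m) (m • a) := by
  induction m with
  | zero => simpa using buLead_one
  | succ m ih => rw [pow_succ, succ_nsmul]; exact buLead_mul ih hp

theorem buLead_prod {ι κ : Type} (S : Finset κ) (p : κ → MvPolynomial ι ℝ) (a : κ → ι →₀ ℕ)
    (h : ∀ i ∈ S, buLead (p i) (a i)) : buLead (∏ i ∈ S, p i) (∑ i ∈ S, a i) := by
  classical
  induction S using Finset.induction_on with
  | empty => simpa using buLead_one
  | insert i S hi ih =>
    rw [Finset.prod_insert hi, Finset.sum_insert hi]
    exact buLead_mul (h i (by simp)) (ih fun j hj => h j (by simp [hj]))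

variable {ι : Type} [Fintype ι]

noncomputable def buG (e : ι → ℕ) (g : ι → MvPolynomial ι ℝ) (b : ι →₀ ℕ) : MvPolynomial ι ℝ :=
  ∏ i, (X i ^ (b i % e i) * g i ^ (b i / e i))

theorem buG_lead (e : ι → ℕ) (g : ι → MvPolynomial ι ℝ)
    (hg : ∀ i, buLead (g i) (Finsupp.single i (e i))) (b : ι →₀ ℕ) : buLead (buG e g b) b := by
  classical
  have hX : ∀ i : ι, buLead (X i : MvPolynomial ι ℝ) (Finsupp.single i 1) := by
    intro i
    unfold buLead
    have : (X i : MvPolynomial ι ℝ) = monomial (Finsupp.single i 1) 1 := rfl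
    rw [this, sub_self]
    exact zero_mem _
  have := buLead_prod Finset.univ (fun i => (X i ^ (b i % e i) * g i ^ (b i / e i)))
    (fun i => (b i % e i) • Finsupp.single i 1 + (b i / e i) • Finsupp.single i (e i))
    (fun i _ => buLead_mul (buLead_pow (hX i) _) (buLead_pow (hg i) _))
  have h2 : ∀ i, (b i % e i) • Finsupp.single i 1 + (b i / e i) • Finsupp.single i (e i)
      = Finsupp.single i (b i) := by
    intro i
    rw [Finsupp.smul_single, Finsupp.smul_single, ← Finsupp.single_add]
    congr 1
    simp only [smul_eq_mul, mul_one]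
    rw [mul_comm]
    exact Nat.mod_add_div _ _
  rw [Finset.sum_congr rfl fun i _ => h2 i, Finsupp.univ_sum_single b] at this
  exact this

noncomputable def buT (e : ι → ℕ) (g : ι → MvPolynomial ι ℝ) :
    MvPolynomial ι ℝ →ₗ[ℝ] MvPolynomial ι ℝ :=
  (basisMonomials ι ℝ).constr ℝ (buG e g)

theorem buT_monomial (e : ι → ℕ) (g : ι → MvPolynomial ι ℝ) (b : ι →₀ ℕ) :
    buT e g (monomial b 1) = buG e g b := by
  have := (basisMonomials ι ℝ).constr_basis ℝ (buG e g) b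
  simpa [buT] using this

theorem bu_ext {M : Type*} [AddCommMonoid M] [Module ℝ M] (f h : MvPolynomial ι ℝ →ₗ[ℝ] M)
    (H : ∀ s, f (monomial s 1) = h (monomial s 1)) : f = h := by
  apply (basisMonomials ι ℝ).ext
  intro s
  simpa using H s

theorem bu_sum (p : MvPolynomial ι ℝ) : p = ∑ s ∈ p.support, coeff s p • monomial s (1 : ℝ) := by
  conv_lhs => rw [p.as_sum]
  refine Finset.sum_congr rfl fun s _ => ?_
  rw [smul_monomial, smul_eq_mul, mul_one]

theorem buT_inj (e : ι → ℕ) (g : ι → MvPolynomial ι ℝ)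
    (hg : ∀ i, buLead (g i) (Finsupp.single i (e i))) : Function.Injective (buT e g) := by
  classical
  rw [injective_iff_map_eq_zero]
  intro p hp
  by_contra hne
  obtain ⟨s, hs, hmax⟩ := Finset.exists_max_image p.support (fun s => s.degree)
    (by rwa [MvPolynomial.support_nonempty])
  have h1 : coeff s (buT e g p) = coeff s p := by
    conv_lhs => rw [bu_sum p]
    rw [map_sum, coeff_sum, Finset.sum_eq_single s]
    · rw [map_smul, buT_monomial, coeff_smul]
      have := buG_lead e g hg s s le_rfl
      rw [coeff_sub, coeff_monomial, if_pos rfl, sub_eq_zero] at this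
      rw [this, smul_eq_mul, mul_one]
    · intro t ht hts
      rw [map_smul, buT_monomial, coeff_smul]
      have := buG_lead e g hg t s (hmax t ht)
      rw [coeff_sub, coeff_monomial, if_neg hts, sub_eq_zero] at this
      rw [this, smul_zero]
    · intro h; exact absurd hs h
  rw [hp, coeff_zero] at h1
  exact (mem_support_iff.1 hs) h1.symm

theorem buT_surj (e : ι → ℕ) (g : ι → MvPolynomial ι ℝ)
    (hg : ∀ i, buLead (g i) (Finsupp.single i (e i))) : Function.Surjective (buT e g) := by
  have key : ∀ N : ℕ, ∀ s : ι →₀ ℕ, s.degree = N →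
      monomial s (1 : ℝ) ∈ LinearMap.range (buT e g) := by
    intro N
    induction N using Nat.strong_induction_on with
    | _ N ih =>
    intro s hs
    have h1 : buT e g (monomial s 1) - (buT e g (monomial s 1) - monomial s 1)
      ∈ LinearMap.range (buT e g) := by
      refine sub_mem (LinearMap.mem_range_self _ _) ?_
      rw [buT_monomial]
      have hl := buG_lead e g hg s
      rw [bu_sum (buG e g s - monomial s 1)]
      refine Submodule.sum_mem _ fun t ht => Submodule.smul_mem _ _ (ih t.degree ?_ t rfl)
      by_contra hlt
      exact (mem_support_iff.1 ht) (hl t (by omega))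
    simpa using h1
  intro p
  have : p ∈ LinearMap.range (buT e g) := by
    rw [bu_sum p]
    exact Submodule.sum_mem _ fun t _ => Submodule.smul_mem _ _ (key _ t rfl)
  exact this

theorem buT_mul (e : ι → ℕ) (he : ∀ i, 0 < e i) (g : ι → MvPolynomial ι ℝ) (i : ι)
    (p : MvPolynomial ι ℝ) : buT e g (p * monomial (Finsupp.single i (e i)) 1) = buT e g p * g i := by
  classical
  have : (buT e g) ∘ₗ (LinearMap.mulRight ℝ (monomial (Finsupp.single i (e i)) 1))
      = (LinearMap.mulRight ℝ (g i)) ∘ₗ buT e g := by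
    apply bu_ext
    intro s
    simp only [LinearMap.comp_apply, LinearMap.mulRight_apply, monomial_mul, one_mul, buT_monomial]
    unfold buG
    rw [← Finset.mul_prod_erase _ _ (Finset.mem_univ i),
      ← Finset.mul_prod_erase _ (fun i => X i ^ (s i % e i) * g i ^ (s i / e i)) (Finset.mem_univ i)]
    have h1 : ∏ x ∈ univ.erase i, (X x ^ ((s + Finsupp.single i (e i)) x % e x)
        * g x ^ ((s + Finsupp.single i (e i)) x / e x))
        = ∏ x ∈ univ.erase i, (X x ^ (s x % e x) * g x ^ (s x / e x)) := by
      refine Finset.prod_congr rfl fun x hx => ?_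
      have : x ≠ i := (Finset.mem_erase.1 hx).1
      simp [this.symm]
    rw [h1]
    simp only [Finsupp.add_apply, Finsupp.single_eq_same, Nat.add_mod_right,
      Nat.add_div_right _ (he i), pow_succ]
    ring
  exact LinearMap.congr_fun this p

/-- The antipodal substitution. -/
noncomputable def buS : MvPolynomial ι ℝ →ₐ[ℝ] MvPolynomial ι ℝ := aeval (fun i => - X i)

theorem buS_monomial (s : ι →₀ ℕ) :
    buS (monomial s (1 : ℝ)) = (-1) ^ s.degree * monomial s (1 : ℝ) := by
  unfold buS
  rw [aeval_monomial, map_one, one_mul, monomial_eq, C_1, one_mul]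
  have : s.degree = ∑ i ∈ s.support, s i := rfl
  rw [this, ← Finset.prod_pow_eq_pow_sum]
  unfold Finsupp.prod
  rw [← Finset.prod_mul_distrib]
  exact Finset.prod_congr rfl fun i _ => neg_pow (X i) (s i)

theorem buS_buS (p : MvPolynomial ι ℝ) : buS (buS p) = p := by
  have : (buS : MvPolynomial ι ℝ →ₐ[ℝ] MvPolynomial ι ℝ).comp buS = AlgHom.id ℝ _ := by
    ext i
    simp [buS]
  exact DFunLike.congr_fun this p

theorem buS_coeff (p : MvPolynomial ι ℝ) (s : ι →₀ ℕ) :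
    coeff s (buS p) = (-1) ^ s.degree * coeff s p := by
  classical
  have : (lcoeff ℝ s) ∘ₗ (buS (ι := ι)).toLinearMap = ((-1 : ℝ) ^ s.degree) • lcoeff ℝ s := by
    apply bu_ext
    intro t
    simp only [LinearMap.comp_apply, AlgHom.toLinearMap_apply, lcoeff_apply, LinearMap.smul_apply,
      buS_monomial]
    have : ((-1 : MvPolynomial ι ℝ) ^ t.degree) = C ((-1) ^ t.degree) := by simp
    rw [this, coeff_C_mul, coeff_monomial, smul_eq_mul]
    split_ifs with h
    · rw [h]
    · simp
  exact LinearMap.congr_fun this p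

theorem buS_G (e : ι → ℕ) (g : ι → MvPolynomial ι ℝ) (hS : ∀ i, buS (g i) = (-1) ^ e i * g i)
    (s : ι →₀ ℕ) : buS (buG e g s) = (-1) ^ s.degree * buG e g s := by
  unfold buG
  rw [map_prod, Finsupp.degree_eq_sum, ← Finset.prod_pow_eq_pow_sum, ← Finset.prod_mul_distrib]
  refine Finset.prod_congr rfl fun i _ => ?_
  rw [map_mul, map_pow, map_pow, hS]
  have : buS (X i : MvPolynomial ι ℝ) = (-1) * X i := by simp [buS]
  rw [this, mul_pow, mul_pow, ← pow_mul]
  conv_rhs => rw [← Nat.mod_add_div (s i) (e i), pow_add]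
  simp only [Nat.mod_add_div]
  ring

theorem buS_T (e : ι → ℕ) (g : ι → MvPolynomial ι ℝ) (hS : ∀ i, buS (g i) = (-1) ^ e i * g i)
    (p : MvPolynomial ι ℝ) : buS (buT e g p) = buT e g (buS p) := by
  have : (buS (ι := ι)).toLinearMap ∘ₗ buT e g = buT e g ∘ₗ (buS (ι := ι)).toLinearMap := by
    apply bu_ext
    intro s
    simp only [LinearMap.comp_apply, AlgHom.toLinearMap_apply, buS_monomial, buT_monomial]
    rw [buS_G e g hS]
    have : ((-1 : MvPolynomial ι ℝ) ^ s.degree) = C ((-1) ^ s.degree) := by simp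
    rw [this, ← smul_eq_C_mul, ← smul_eq_C_mul, map_smul, buT_monomial]
  exact LinearMap.congr_fun this p


/-- The even polynomials. -/
noncomputable def buE : Subalgebra ℝ (MvPolynomial ι ℝ) :=
  AlgHom.equalizer (buS (ι := ι)) (AlgHom.id ℝ _)

theorem mem_buE (p : MvPolynomial ι ℝ) : p ∈ (buE : Subalgebra ℝ (MvPolynomial ι ℝ)) ↔ buS p = p := by
  unfold buE
  rw [AlgHom.mem_equalizer]
  rfl

/-- Exponent vectors of even standard monomials. -/
abbrev buStd (e : ι → ℕ) : Type := {a : ∀ i, Fin (e i) // Even (∑ i, (a i : ℕ))}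

noncomputable def buExp (e : ι → ℕ) (a : buStd e) : ι →₀ ℕ :=
  Finsupp.equivFunOnFinite.symm fun i => (a.1 i : ℕ)

theorem buExp_apply (e : ι → ℕ) (a : buStd e) (i : ι) : buExp e a i = a.1 i := rfl

theorem buExp_degree (e : ι → ℕ) (a : buStd e) : Even (buExp e a).degree := by
  rw [Finsupp.degree_eq_sum]
  exact a.2

theorem buExp_inj (e : ι → ℕ) : Function.Injective (buExp e) := by
  intro a b h
  apply Subtype.ext
  funext i
  apply Fin.ext
  exact DFunLike.congr_fun h i

theorem bu_alg (e : ι → ℕ) (he : ∀ i, 0 < e i) (g : ι → MvPolynomial ι ℝ)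
    (hg : ∀ i, buLead (g i) (Finsupp.single i (e i)))
    (hS : ∀ i, buS (g i) = (-1) ^ e i * g i) (hodd : Odd (Nat.card (buStd e))) :
    ∃ c : (buE : Subalgebra ℝ (MvPolynomial ι ℝ)) →ₐ[ℝ] ℝ,
      ∀ p : (buE : Subalgebra ℝ (MvPolynomial ι ℝ)),
        (p : MvPolynomial ι ℝ) ∈ Ideal.span (Set.range g) → c p = 0 := by
  classical
  let T : MvPolynomial ι ℝ ≃ₗ[ℝ] MvPolynomial ι ℝ :=
    LinearEquiv.ofBijective (buT e g) ⟨buT_inj e g hg, buT_surj e g hg⟩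
  have hT : ∀ p, T p = buT e g p := fun p => rfl
  have hST : ∀ p, buS (T.symm p) = T.symm (buS p) := by
    intro p
    apply T.injective
    rw [LinearEquiv.apply_symm_apply, hT, ← buS_T e g hS, ← hT, LinearEquiv.apply_symm_apply]
  let ρ : (buE : Subalgebra ℝ (MvPolynomial ι ℝ)) →ₗ[ℝ] (buStd e → ℝ) :=
    LinearMap.pi fun a => (lcoeff ℝ (buExp e a)) ∘ₗ T.symm.toLinearMap ∘ₗ (buE (ι := ι)).val.toLinearMap
  have hρ : ∀ p a, ρ p a = coeff (buExp e a) (T.symm p) := fun p a => rfl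
  -- characterisation of the ideal
  have hstd : ∀ p : MvPolynomial ι ℝ, p ∈ Ideal.span (Set.range g) ↔
      ∀ s : ι →₀ ℕ, (∀ i, s i < e i) → coeff s (T.symm p) = 0 := by
    intro p
    constructor
    · intro hp
      have main : ∀ q, ∀ s : ι →₀ ℕ, (∀ i, s i < e i) → coeff s (T.symm (q * p)) = 0 := by
        refine Submodule.span_induction ?_ ?_ ?_ ?_ (p := fun p _ => ∀ q, ∀ s : ι →₀ ℕ,
          (∀ i, s i < e i) → coeff s (T.symm (q * p)) = 0) hp
        · rintro _ ⟨i, rfl⟩ q s hs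
          have : T.symm (q * g i) = T.symm q * monomial (Finsupp.single i (e i)) 1 := by
            apply T.injective
            rw [LinearEquiv.apply_symm_apply, hT, buT_mul e he, ← hT, LinearEquiv.apply_symm_apply]
          rw [this, coeff_mul_monomial', if_neg]
          intro hle
          have := hle i
          rw [Finsupp.single_eq_same] at this
          exact absurd (hs i) (by omega)
        · intro q s _; simp
        · intro x y _ _ hx hy q s hs
          rw [mul_add, map_add, coeff_add, hx q s hs, hy q s hs, add_zero]
        · intro a x _ hx q s hs
          rw [smul_eq_mul, ← mul_assoc]
          exact hx _ s hs
      simpa using main 1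
    · intro h
      rw [← T.apply_symm_apply p, hT, bu_sum (T.symm p), map_sum]
      refine Submodule.sum_mem _ fun s hs => ?_
      rw [map_smul, buT_monomial, smul_eq_C_mul]
      apply Ideal.mul_mem_left
      have : ∃ i, e i ≤ s i := by
        by_contra hcon
        push Not at hcon
        exact (mem_support_iff.1 hs) (h s hcon)
      obtain ⟨i, hi⟩ := this
      unfold buG
      rw [← Finset.mul_prod_erase _ _ (Finset.mem_univ i)]
      apply Ideal.mul_mem_right
      apply Ideal.mul_mem_left
      have hd : 0 < s i / e i := Nat.div_pos hi (he i)
      exact Ideal.pow_mem_of_mem _ (Ideal.subset_span (Set.mem_range_self i)) _ hd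
  let J : Ideal (buE : Subalgebra ℝ (MvPolynomial ι ℝ)) :=
    (Ideal.span (Set.range g)).comap (buE (ι := ι)).val.toRingHom
  have hJ : ∀ p : (buE : Subalgebra ℝ (MvPolynomial ι ℝ)), p ∈ J ↔
    (p : MvPolynomial ι ℝ) ∈ Ideal.span (Set.range g) := fun p => Iff.rfl
  have hker : LinearMap.ker ρ = J.restrictScalars ℝ := by
    ext p
    rw [LinearMap.mem_ker, Submodule.restrictScalars_mem, hJ, hstd]
    constructor
    · intro h s hs
      by_cases hev : Even s.degree
      · let a : buStd e := ⟨fun i => ⟨s i, hs i⟩, by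
          rw [Finsupp.degree_eq_sum] at hev; exact hev⟩
        have hsa : s = buExp e a := by ext i; rfl
        rw [hsa, ← hρ, h]; rfl
      · have h1 := buS_coeff (T.symm p) s
        rw [hST, (mem_buE _).1 p.2, (Nat.not_even_iff_odd.1 hev).neg_one_pow] at h1
        linarith
    · intro h
      funext a
      rw [hρ]
      exact h _ fun i => (a.1 i).2
  have hsurj : Function.Surjective ρ := by
    intro w
    have hmem : T (∑ a, w a • monomial (buExp e a) 1) ∈
        (buE : Subalgebra ℝ (MvPolynomial ι ℝ)) := by
      rw [mem_buE, hT, buS_T e g hS]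
      congr 1
      rw [map_sum]
      refine Finset.sum_congr rfl fun a _ => ?_
      rw [map_smul, buS_monomial, (buExp_degree e a).neg_one_pow, one_mul]
    refine ⟨⟨T (∑ a, w a • monomial (buExp e a) 1), hmem⟩, ?_⟩
    · funext b
      rw [hρ]
      simp only [LinearEquiv.symm_apply_apply, coeff_sum, coeff_smul, coeff_monomial,
        (buExp_inj e).eq_iff]
      simp
  have hfin : Module.finrank ℝ ((buE : Subalgebra ℝ (MvPolynomial ι ℝ)) ⧸ J) = Nat.card (buStd e) := by
    have e1 : ((buE : Subalgebra ℝ (MvPolynomial ι ℝ)) ⧸ J.restrictScalars ℝ) ≃ₗ[ℝ] (buStd e → ℝ) :=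
      (Submodule.quotEquivOfEq _ _ hker.symm).trans (ρ.quotKerEquivOfSurjective hsurj)
    have e2 : ((buE : Subalgebra ℝ (MvPolynomial ι ℝ)) ⧸ J.restrictScalars ℝ) ≃ₗ[ℝ]
      ((buE : Subalgebra ℝ (MvPolynomial ι ℝ)) ⧸ J) := Submodule.Quotient.restrictScalarsEquiv ℝ J
    rw [(e2.symm.trans e1).finrank_eq, Module.finrank_fintype_fun_eq_card, Nat.card_eq_fintype_card]
  obtain ⟨χ⟩ := bu_point (B := (buE : Subalgebra ℝ (MvPolynomial ι ℝ)) ⧸ J) (by rwa [hfin])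
  refine ⟨χ.comp (Ideal.Quotient.mkₐ ℝ J), fun p hp => ?_⟩
  rw [AlgHom.comp_apply]
  have : Ideal.Quotient.mkₐ ℝ J p = 0 := Ideal.Quotient.eq_zero_iff_mem.2 ((hJ p).2 hp)
  rw [this, map_zero]

/-- A real character of the even subalgebra with some `c (x_i^2) > 0` is an evaluation. -/
theorem bu_eval (c : (buE : Subalgebra ℝ (MvPolynomial ι ℝ)) →ₐ[ℝ] ℝ) (i : ι)
    (hi : ∀ p : (buE : Subalgebra ℝ (MvPolynomial ι ℝ)), (p : MvPolynomial ι ℝ) = X i * X i → 0 < c p) :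
    ∃ a : ι → ℝ, a i ≠ 0 ∧ ∀ p : (buE : Subalgebra ℝ (MvPolynomial ι ℝ)),
      c p = eval a (p : MvPolynomial ι ℝ) := by
  have hX : ∀ j, buS (X j : MvPolynomial ι ℝ) = - X j := fun j => by simp [buS]
  have hS2 : ∀ p : MvPolynomial ι ℝ, (p + buS p) ∈ (buE : Subalgebra ℝ (MvPolynomial ι ℝ)) := by
    intro p; rw [mem_buE, map_add, buS_buS, add_comm]
  obtain ⟨c', hc'⟩ : ∃ c' : MvPolynomial ι ℝ →ₗ[ℝ] ℝ,
      ∀ p : (buE : Subalgebra ℝ (MvPolynomial ι ℝ)), c' p = c p := by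
    let c' : MvPolynomial ι ℝ →ₗ[ℝ] ℝ :=
      { toFun := fun p => (1 / 2 : ℝ) * c ⟨p + buS p, hS2 p⟩
        map_add' := by
          intro p q
          have h : (⟨p + q + buS (p + q), hS2 (p + q)⟩ : (buE : Subalgebra ℝ (MvPolynomial ι ℝ)))
              = ⟨p + buS p, hS2 p⟩ + ⟨q + buS q, hS2 q⟩ := Subtype.ext (by
            change p + q + buS (p + q) = (p + buS p) + (q + buS q)
            rw [map_add]; ring)
          rw [h, map_add, mul_add]
        map_smul' := by
          intro r p
          have h : (⟨r • p + buS (r • p), hS2 (r • p)⟩ : (buE : Subalgebra ℝ (MvPolynomial ι ℝ)))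
              = r • ⟨p + buS p, hS2 p⟩ := Subtype.ext (by
            change r • p + buS (r • p) = r • (p + buS p)
            rw [map_smul, smul_add])
          rw [h, map_smul]
          simp only [smul_eq_mul, RingHom.id_apply]
          ring }
    have hc' : ∀ p : (buE : Subalgebra ℝ (MvPolynomial ι ℝ)), c' p = c p := by
      intro p
      have h1 : c' p = (1 / 2 : ℝ) * c ⟨(p : MvPolynomial ι ℝ) + buS (p : MvPolynomial ι ℝ), hS2 p⟩ := rfl
      have h2 : (⟨(p : MvPolynomial ι ℝ) + buS (p : MvPolynomial ι ℝ), hS2 p⟩ : (buE : Subalgebra ℝ (MvPolynomial ι ℝ)))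
          = p + p := Subtype.ext (by
            change (p : MvPolynomial ι ℝ) + buS (p : MvPolynomial ι ℝ) = p + p
            rw [(mem_buE _).1 p.2])
      rw [h1, h2, map_add]; ring
    exact ⟨c', hc'⟩
  have hmul : ∀ p q : MvPolynomial ι ℝ, buS p = p → buS q = q → c' (p * q) = c' p * c' q := by
    intro p q hp hq
    rw [← mem_buE] at hp hq
    rw [hc' ⟨p, hp⟩, hc' ⟨q, hq⟩, ← map_mul]
    exact hc' (⟨p, hp⟩ * ⟨q, hq⟩)
  have hXX : ∀ j k, buS (X j * X k : MvPolynomial ι ℝ) = X j * X k := by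
    intro j k; rw [map_mul, hX, hX]; ring
  have hpos : 0 < c' (X i * X i) := by
    have h := (mem_buE _).2 (hXX i i)
    have := hc' ⟨X i * X i, h⟩
    have h2 := hi ⟨X i * X i, h⟩ rfl
    rw [← this] at h2
    exact h2
  set r := Real.sqrt (c' (X i * X i)) with hr
  have hr0 : 0 < r := Real.sqrt_pos.2 hpos
  have hrr : r * r = c' (X i * X i) := Real.mul_self_sqrt hpos.le
  let a : ι → ℝ := fun j => c' (X i * X j) / r
  have hai : a i = r := by
    change c' (X i * X i) / r = r
    rw [← hrr]; field_simp
  have haj : ∀ j, c' (X i * X j) = r * a j := by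
    intro j
    change _ = r * (c' (X i * X j) / r)
    field_simp
  refine ⟨a, by rw [hai]; exact hr0.ne', ?_⟩
  have hmon : ∀ s : ι →₀ ℕ, (Even s.degree → c' (monomial s 1) = eval a (monomial s 1)) ∧
      (Odd s.degree → c' (X i * monomial s 1) = r * eval a (monomial s 1)) := by
    have key : ∀ N : ℕ, ∀ s : ι →₀ ℕ, s.degree = N →
        (Even s.degree → c' (monomial s 1) = eval a (monomial s 1)) ∧
        (Odd s.degree → c' (X i * monomial s 1) = r * eval a (monomial s 1)) := by
      intro N
      induction N with
      | zero =>
        intro s hs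
        have hs0 : s = 0 := (Finsupp.degree_eq_zero_iff s).1 hs
        subst hs0
        have h1 : (monomial (0 : ι →₀ ℕ) (1 : ℝ)) = 1 := rfl
        refine ⟨fun _ => ?_, fun h => by simp at h⟩
        rw [h1, map_one (eval a)]
        have := hc' 1
        rw [map_one] at this
        exact this
      | succ N ih =>
        intro s hs
        have hne : s ≠ 0 := by rintro rfl; simp at hs
        obtain ⟨j, hj⟩ := Finsupp.ne_iff.1 hne
        have hj1 : Finsupp.single j 1 ≤ s := by
          rw [Finsupp.single_le_iff]
          exact Nat.one_le_iff_ne_zero.2 hj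
        obtain ⟨t, rfl⟩ := exists_add_of_le hj1
        rw [map_add, Finsupp.degree_single] at hs ⊢
        have ht : t.degree = N := by omega
        obtain ⟨ih1, ih2⟩ := ih t ht
        have hm : (monomial (Finsupp.single j 1 + t) (1 : ℝ)) = X j * monomial t 1 := by
          rw [X, monomial_mul, one_mul]
        rw [hm, map_mul (eval a), eval_X]
        constructor
        · intro hev
          have hod : Odd t.degree := by
            rcases Nat.even_or_odd t.degree with h | h
            · exact absurd hev (by rw [Nat.not_even_iff_odd, add_comm]; exact h.add_one)
            · exact h
          have hSt : buS (monomial t (1 : ℝ)) = - monomial t 1 := by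
            rw [buS_monomial, hod.neg_one_pow, neg_one_mul]
          have hSX : ∀ l, buS (X l * monomial t (1 : ℝ)) = X l * monomial t 1 := by
            intro l; rw [map_mul, hSt, hX]; ring
          have e1 : c' ((X i * X i) * (X j * monomial t 1)) =
              c' ((X i * X j) * (X i * monomial t 1)) := by congr 1; ring
          rw [hmul _ _ (hXX i i) (hSX j), hmul _ _ (hXX i j) (hSX i), ih2 hod, ← hrr, haj] at e1
          have hrr0 : r * r ≠ 0 := (mul_pos hr0 hr0).ne'
          apply mul_left_cancel₀ hrr0
          rw [e1]; ring
        · intro hod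
          have hev : Even t.degree := by
            rcases Nat.even_or_odd t.degree with h | h
            · exact h
            · exact absurd hod (by rw [Nat.not_odd_iff_even, add_comm]; exact h.add_one)
          have hSt : buS (monomial t (1 : ℝ)) = monomial t 1 := by
            rw [buS_monomial, hev.neg_one_pow, one_mul]
          rw [← mul_assoc, hmul _ _ (hXX i j) hSt, ih1 hev, haj]; ring
    exact fun s => key _ s rfl
  have haev : ∀ p : MvPolynomial ι ℝ, aeval a p = eval a p :=
    fun p => DFunLike.congr_fun (coe_aeval_eq_eval a) p
  have hlin : c' ∘ₗ (LinearMap.id + (buS (ι := ι)).toLinearMap) =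
      (aeval a : MvPolynomial ι ℝ →ₐ[ℝ] ℝ).toLinearMap ∘ₗ (LinearMap.id + (buS (ι := ι)).toLinearMap) := by
    apply bu_ext
    intro s
    simp only [LinearMap.comp_apply, LinearMap.add_apply, LinearMap.id_apply,
      AlgHom.toLinearMap_apply, buS_monomial]
    rcases Nat.even_or_odd s.degree with h | h
    · rw [h.neg_one_pow, one_mul, map_add, map_add, (hmon s).1 h, haev]
    · rw [h.neg_one_pow, neg_one_mul, add_neg_cancel, map_zero, map_zero]
  intro p
  have h1 := LinearMap.congr_fun hlin p
  simp only [LinearMap.comp_apply, LinearMap.add_apply, LinearMap.id_apply,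
      AlgHom.toLinearMap_apply, (mem_buE _).1 p.2, map_add, hc'] at h1
  rw [haev] at h1
  linarith

end BU

section BU
open MvPolynomial

def buSurf (n : ℕ) : Set (Fin (n + 1) → ℝ) := {x | x 0 ^ 6 + ∑ j : Fin n, x j.succ ^ 2 = 1}

def buExpo (n d : ℕ) : Fin (n + 1) → ℕ := fun i => Fin.cases 6 (fun _ => d) i

theorem bu_card (n d : ℕ) (hd : Odd d) : Odd (Nat.card (buStd (buExpo n d))) := by
  have hlt : ∀ (t : Fin 3) (s : ℕ), 2 * (t : ℕ) + s % 2 < buExpo n d 0 := by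
    intro t s
    have : buExpo n d 0 = 6 := rfl
    have := Nat.mod_lt s (show 2 > 0 by norm_num)
    omega
  let F : Fin 3 × (Fin n → Fin d) → buStd (buExpo n d) := fun x =>
    ⟨Fin.cons (α := fun i => Fin (buExpo n d i)) ⟨2 * (x.1 : ℕ) + (∑ j, (x.2 j : ℕ)) % 2, hlt _ _⟩
      (fun j => x.2 j), by
      rw [Fin.sum_univ_succ]
      change Even (2 * (x.1 : ℕ) + (∑ j, (x.2 j : ℕ)) % 2 + ∑ j, (x.2 j : ℕ))
      rw [Nat.even_iff]
      omega⟩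
  have hF : Function.Bijective F := by
    constructor
    · intro x y h
      have h0 := congrArg Subtype.val h
      have h2 : x.2 = y.2 := by
        funext j
        exact congrFun h0 j.succ
      have h1 : 2 * (x.1 : ℕ) + (∑ j, (x.2 j : ℕ)) % 2 = 2 * (y.1 : ℕ) + (∑ j, (y.2 j : ℕ)) % 2 :=
        congrArg Fin.val (congrFun h0 0)
      rw [h2] at h1
      exact Prod.ext (Fin.ext (by omega)) h2
    · rintro ⟨a, ha⟩
      have h6 : (a 0 : ℕ) < 6 := (a 0).2
      refine ⟨(⟨(a 0 : ℕ) / 2, by omega⟩, fun j => a j.succ), ?_⟩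
      apply Subtype.ext
      funext i
      refine Fin.cases ?_ (fun j => ?_) i
      · apply Fin.ext
        rw [Fin.sum_univ_succ, Nat.even_iff] at ha
        change 2 * ((a 0 : ℕ) / 2) + (∑ j : Fin n, (a j.succ : ℕ)) % 2 = a 0
        omega
      · rfl
  rw [← Nat.card_congr (Equiv.ofBijective F hF), Nat.card_eq_fintype_card, Fintype.card_prod,
    Fintype.card_fun, Fintype.card_fin, Fintype.card_fin, Fintype.card_fin]
  exact Odd.mul (by decide) hd.pow

noncomputable def buSys {n : ℕ} (d : ℕ) (q : Fin n → MvPolynomial (Fin (n + 1)) ℝ) :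
    Fin (n + 1) → MvPolynomial (Fin (n + 1)) ℝ := fun i =>
  Fin.cases (X 0 ^ 6 + ∑ j : Fin n, X j.succ ^ 2 - 1) (fun j => X j.succ ^ d + q j) i

theorem bu_poly {n : ℕ} (q : Fin n → MvPolynomial (Fin (n + 1)) ℝ) (hq : ∀ j, buS (q j) = - q j) :
    ∃ a ∈ buSurf n, ∃ d : ℕ, ∀ j, a j.succ ^ d + eval a (q j) = 0 := by
  let d := 2 * (∑ j, (q j).totalDegree) + 1
  have hd : Odd d := ⟨_, rfl⟩
  have hdq : ∀ j, (q j).totalDegree < d := by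
    intro j
    have := Finset.single_le_sum (f := fun j => (q j).totalDegree) (fun _ _ => Nat.zero_le _)
      (Finset.mem_univ j)
    omega
  have hXS : ∀ j, buS (X j : MvPolynomial (Fin (n + 1)) ℝ) = - X j := fun j => by simp [buS]
  have hX2 : ∀ j, buS (X j * X j : MvPolynomial (Fin (n + 1)) ℝ) = X j * X j := by
    intro j; rw [map_mul, hXS]; ring
  have hXl : ∀ (i : Fin (n + 1)) (m : ℕ), (X i : MvPolynomial (Fin (n + 1)) ℝ) ^ m
      = monomial (Finsupp.single i m) 1 := fun i m => X_pow_eq_monomial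
  obtain ⟨c, hc⟩ := bu_alg (buExpo n d)
    (fun i => by
      refine Fin.cases ?_ (fun j => ?_) i
      · change 0 < 6; norm_num
      · exact hd.pos)
    (buSys d q)
    (fun i => by
      refine Fin.cases ?_ (fun j => ?_) i
      · change X 0 ^ 6 + ∑ j : Fin n, X j.succ ^ 2 - 1 - monomial (Finsupp.single 0 6) 1 ∈
          buLow (Finsupp.single (0 : Fin (n + 1)) 6).degree
        rw [Finsupp.degree_single, ← hXl, add_sub_assoc, add_sub_cancel_left]
        refine sub_mem (Submodule.sum_mem _ fun j _ => ?_) ?_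
        · rw [hXl]
          refine buLow_mono ?_ (buLow_monomial _ _)
          rw [Finsupp.degree_single]; norm_num
        · refine buLow_mono ?_ (buLow_monomial (0 : Fin (n + 1) →₀ ℕ) (1 : ℝ))
          simp
      · change X j.succ ^ d + q j - monomial (Finsupp.single j.succ d) 1 ∈
          buLow (Finsupp.single j.succ d).degree
        rw [Finsupp.degree_single, ← hXl, add_sub_cancel_left]
        exact buLow_of_totalDegree (hdq j))
    (fun i => by
      refine Fin.cases ?_ (fun j => ?_) i
      · change buS (X 0 ^ 6 + ∑ j : Fin n, X j.succ ^ 2 - 1) = (-1) ^ 6 *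
          (X 0 ^ 6 + ∑ j : Fin n, X j.succ ^ 2 - 1)
        rw [map_sub, map_add, map_sum, map_one, map_pow, hXS]
        simp only [map_pow, hXS]
        simp only [even_two, Even.neg_pow]
        ring
      · change buS (X j.succ ^ d + q j) = (-1) ^ d * (X j.succ ^ d + q j)
        rw [map_add, map_pow, hXS, hq, hd.neg_one_pow, hd.neg_pow]
        ring)
    (bu_card n d hd)
  let m : Fin (n + 1) → (buE : Subalgebra ℝ (MvPolynomial (Fin (n + 1)) ℝ)) := fun i =>
    ⟨X i * X i, (mem_buE _).2 (hX2 i)⟩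
  have hm0 : c (m 0 ^ 3 + ∑ j : Fin n, m j.succ - 1) = 0 := by
    apply hc
    have : ((m 0 ^ 3 + ∑ j : Fin n, m j.succ - 1 :
        (buE : Subalgebra ℝ (MvPolynomial (Fin (n + 1)) ℝ))) : MvPolynomial (Fin (n + 1)) ℝ)
        = buSys d q 0 := by
      change _ = X 0 ^ 6 + ∑ j : Fin n, X j.succ ^ 2 - 1
      push_cast
      simp only [m, ← pow_two, ← pow_mul]
    rw [this]
    exact Ideal.subset_span (Set.mem_range_self 0)
  rw [map_sub, map_add, map_pow, map_sum, map_one] at hm0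
  have hex : ∃ i, 0 < c (m i) := by
    by_contra hcon
    push Not at hcon
    have h1 : ∑ j : Fin n, c (m j.succ) ≤ 0 := Finset.sum_nonpos fun j _ => hcon _
    have h2 : c (m 0) ^ 3 ≤ 0 := by
      have := hcon 0
      nlinarith [sq_nonneg (c (m 0)), mul_nonneg (sq_nonneg (c (m 0))) (neg_nonneg.2 this)]
    linarith
  obtain ⟨i, hi⟩ := hex
  obtain ⟨a, hai, ha⟩ := bu_eval c i (fun p hp => by
    have : p = m i := Subtype.ext hp
    rwa [this])
  refine ⟨a, ?_, d, ?_⟩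
  · have hma : ∀ j, c (m j) = a j ^ 2 := by
      intro j
      rw [ha]
      simp [m, pow_two]
    simp only [hma] at hm0
    change a 0 ^ 6 + ∑ j : Fin n, a j.succ ^ 2 = 1
    linarith [hm0, show (a 0 ^ 2) ^ 3 = a 0 ^ 6 by ring]
  · intro j
    have hev : X i * (X j.succ ^ d + q j) ∈ (buE : Subalgebra ℝ (MvPolynomial (Fin (n + 1)) ℝ)) := by
      rw [mem_buE, map_mul, map_add, map_pow, hXS, hXS, hq, hd.neg_pow]; ring
    have h0 := hc ⟨_, hev⟩ (Ideal.mul_mem_left _ _ (Ideal.subset_span ⟨j.succ, rfl⟩))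
    rw [ha] at h0
    simpa [hai] using h0

theorem buSurf_neg {n : ℕ} {x : Fin (n + 1) → ℝ} (hx : x ∈ buSurf n) : -x ∈ buSurf n := by
  change (-x 0) ^ 6 + ∑ j : Fin n, (-x j.succ) ^ 2 = 1
  have : x 0 ^ 6 + ∑ j : Fin n, x j.succ ^ 2 = 1 := hx
  simpa [Even.neg_pow (show Even 6 by decide)] using this

theorem buSurf_le {n : ℕ} {x : Fin (n + 1) → ℝ} (hx : x ∈ buSurf n) (i : Fin (n + 1)) :
    |x i| ≤ 1 := by
  have hx : x 0 ^ 6 + ∑ j : Fin n, x j.succ ^ 2 = 1 := hx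
  have h0 : 0 ≤ x 0 ^ 6 := by positivity
  refine Fin.cases ?_ (fun j => ?_) i
  · have : x 0 ^ 6 ≤ 1 := by
      have : 0 ≤ ∑ j : Fin n, x j.succ ^ 2 := Finset.sum_nonneg fun j _ => sq_nonneg _
      linarith
    rw [← Even.pow_abs (show Even 6 by decide)] at this
    exact (pow_le_one_iff_of_nonneg (abs_nonneg _) (by norm_num)).1 this
  · have := Finset.single_le_sum (f := fun j : Fin n => x j.succ ^ 2) (fun _ _ => sq_nonneg _)
      (Finset.mem_univ j)
    rw [← sq_le_one_iff_abs_le_one]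
    linarith

theorem buSurf_compact (n : ℕ) : IsCompact (buSurf n) := by
  apply Metric.isCompact_of_isClosed_isBounded
  · exact isClosed_eq (by fun_prop) continuous_const
  · rw [isBounded_iff_forall_norm_le]
    exact ⟨1, fun x hx => (pi_norm_le_iff_of_nonneg zero_le_one).2 fun i => buSurf_le hx i⟩

theorem buSurf_nonempty (n : ℕ) : (buSurf n).Nonempty := by
  refine ⟨Fin.cons 1 0, ?_⟩
  simp [buSurf]

theorem bu_zero_notMem (n : ℕ) : (0 : Fin (n + 1) → ℝ) ∉ buSurf n := by
  simp [buSurf]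

/-- Stone-Weierstrass for multivariate polynomials on a compact set. -/
theorem bu_sw {ι : Type} [Fintype ι] (S : Set (ι → ℝ)) (hS : IsCompact S) (f : (ι → ℝ) → ℝ)
    (hf : ContinuousOn f S) (ε : ℝ) (hε : 0 < ε) :
    ∃ p : MvPolynomial ι ℝ, ∀ x ∈ S, |eval x p - f x| < ε := by
  have : CompactSpace S := isCompact_iff_compactSpace.1 hS
  let co : ι → C(S, ℝ) := fun i => ⟨fun x => x.1 i, (continuous_apply i).comp continuous_subtype_val⟩
  let Φ : MvPolynomial ι ℝ →ₐ[ℝ] C(S, ℝ) := aeval co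
  have hΦ : ∀ p (x : S), Φ p x = eval x.1 p := by
    intro p x
    induction p using MvPolynomial.induction_on with
    | C a => simp [Φ]
    | add p q hp hq => rw [map_add, ContinuousMap.add_apply, hp, hq, map_add]
    | mul_X p i hp => rw [map_mul, ContinuousMap.mul_apply, hp, map_mul]; simp [Φ, co]
  have hsep : Φ.range.SeparatesPoints := by
    intro x y hxy
    have : ∃ i, x.1 i ≠ y.1 i := by
      by_contra h
      push Not at h
      exact hxy (Subtype.ext (funext h))
    obtain ⟨i, hi⟩ := this
    refine ⟨_, ⟨Φ (X i), ⟨X i, rfl⟩, rfl⟩, ?_⟩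
    change Φ (X i) x ≠ Φ (X i) y
    rw [hΦ, hΦ, eval_X, eval_X]
    exact hi
  let F : C(S, ℝ) := ⟨S.domRestrict f, hf.domRestrict⟩
  obtain ⟨⟨_, ⟨p, rfl⟩⟩, hp⟩ :=
    ContinuousMap.exists_mem_subalgebra_near_continuousMap_of_separatesPoints Φ.range hsep F ε hε
  refine ⟨p, fun x hx => ?_⟩
  have h1 := (ContinuousMap.norm_coe_le_norm _ (⟨x, hx⟩ : S)).trans_lt hp
  have h2 := hΦ p ⟨x, hx⟩
  change ‖Φ p ⟨x, hx⟩ - F ⟨x, hx⟩‖ < ε at h1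
  rw [h2] at h1
  exact h1

/-- Borsuk-Ulam. -/
theorem bu_main (n : ℕ) (f : (Fin (n + 1) → ℝ) → (Fin n → ℝ)) (hf : ContinuousOn f (buSurf n))
    (hodd : ∀ x ∈ buSurf n, f (-x) = - f x) : ∃ x ∈ buSurf n, f x = 0 := by
  by_contra hcon
  push Not at hcon
  obtain ⟨x0, hx0, hmin⟩ := (buSurf_compact n).exists_isMinOn (buSurf_nonempty n) hf.norm
  have hpos : 0 < ‖f x0‖ := norm_pos_iff.2 (hcon x0 hx0)
  set δ := ‖f x0‖ / 3 with hδ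
  have hδ0 : 0 < δ := by positivity
  choose p hp using fun j : Fin n => bu_sw (buSurf n) (buSurf_compact n) (fun x => f x j)
    (fun x hx => (continuous_apply j).continuousAt.comp_continuousWithinAt (hf x hx)) δ hδ0
  have hSe : ∀ (p : MvPolynomial (Fin (n + 1)) ℝ) x, eval x (buS p) = eval (-x) p := by
    intro p x
    induction p using MvPolynomial.induction_on with
    | C a => simp [buS]
    | add p q hp hq => rw [map_add, map_add, hp, hq, map_add]
    | mul_X p i hp => rw [map_mul, map_mul, hp, map_mul]; simp [buS]
  obtain ⟨a, ha, d, had⟩ := bu_poly (fun j => C (δ⁻¹ / 2) * (p j - buS (p j))) (by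
    intro j
    have : buS (C (δ⁻¹ / 2) : MvPolynomial (Fin (n + 1)) ℝ) = C (δ⁻¹ / 2) := by
      simp [buS]
    rw [map_mul, map_sub, buS_buS, this]; ring)
  have hlt : ‖f a‖ < 3 * δ := by
    rw [pi_norm_lt_iff (by positivity)]
    intro j
    have h1 := hp j a ha
    have h2 := hp j (-a) (buSurf_neg ha)
    have h3 := had j
    have h4 : |a j.succ ^ d| ≤ 1 := by
      rw [abs_pow]; exact pow_le_one₀ (abs_nonneg _) (buSurf_le ha _)
    simp only [map_mul, map_sub, eval_C, hSe] at h3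
    simp only [hodd a ha, Pi.neg_apply] at h2
    rw [abs_lt] at h1 h2
    rw [abs_le] at h4
    have h5 : eval a (p j) - eval (-a) (p j) = - 2 * δ * a j.succ ^ d := by
      field_simp at h3
      linarith
    rw [Real.norm_eq_abs, abs_lt]
    constructor <;> nlinarith
  have := hmin ha
  change ‖f x0‖ ≤ ‖f a‖ at this
  rw [hδ] at hlt
  linarith

end BU

theorem sp_perm (a b : Fin n → ℝ) (ha : Monotone a)
    (h : Finset.univ.val.map a = Finset.univ.val.map b) : ∃ τ : Equiv.Perm (Fin n), a = b ∘ τ := by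
  refine ⟨Tuple.sort b, ?_⟩
  rw [Fin.univ_val_map, Fin.univ_val_map, Multiset.coe_eq_coe] at h
  apply List.ofFn_injective
  refine List.Perm.eq_of_pairwise' (r := (· ≤ ·)) ?_ ?_
    (h.trans ((Tuple.sort b).ofFn_comp_perm b).symm)
  · exact ha.sortedLE_ofFn.pairwise
  · exact (Tuple.monotone_sort b).sortedLE_ofFn.pairwise

theorem sp_diag (L : Matrix (Fin n) (Fin n) ℝ) (hL : L.IsHermitian)
    (lam : Fin n → ℝ) (hmono : Monotone lam)
    (hroots : Finset.univ.val.map lam = L.charpoly.roots) :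
    ∃ C : (Fin n → ℝ) ≃ₗ[ℝ] (Fin n → ℝ), ∀ y, (∑ i, C y i ^ 2 = ∑ i, y i ^ 2) ∧
      ∑ i, lam i * C y i ^ 2 = ∑ i, y i * (L.mulVec y) i := by
  rw [hL.roots_charpoly_eq_eigenvalues] at hroots
  obtain ⟨τ, hτ⟩ := sp_perm lam hL.eigenvalues hmono hroots
  let B := hL.eigenvectorBasis.reindex τ.symm
  let C : (Fin n → ℝ) ≃ₗ[ℝ] (Fin n → ℝ) :=
    (WithLp.linearEquiv 2 ℝ (Fin n → ℝ)).symm ≪≫ₗ B.repr.toLinearEquiv ≪≫ₗ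
      (WithLp.linearEquiv 2 ℝ (Fin n → ℝ))
  have hB : ∀ i, L.mulVec (B i) = lam i • (B i : Fin n → ℝ) := by
    intro i
    have := hL.mulVec_eigenvectorBasis (τ i)
    simp only [B, OrthonormalBasis.reindex_apply, Equiv.symm_symm, hτ]
    exact this
  have hC : ∀ y i, C y i = ∑ j, B i j * y j := by
    intro y i
    change B.repr (WithLp.toLp 2 y) i = _
    rw [OrthonormalBasis.repr_apply_apply]
    simp [PiLp.inner_apply, mul_comm]
  have hnorm : ∀ y, ∑ i, C y i ^ 2 = ∑ i, y i ^ 2 := by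
    intro y
    have h1 : ‖B.repr (WithLp.toLp 2 y)‖ ^ 2 = ‖(WithLp.toLp 2 y : EuclideanSpace ℝ (Fin n))‖ ^ 2 := by
      rw [LinearIsometryEquiv.norm_map]
    rw [EuclideanSpace.norm_sq_eq, EuclideanSpace.norm_sq_eq] at h1
    simp only [Real.norm_eq_abs, sq_abs] at h1
    exact h1
  have hLC : ∀ y i, C (L.mulVec y) i = lam i * C y i := by
    intro y i
    rw [hC, hC]
    have h1 : ∑ j, B i j * (L.mulVec y) j = ∑ j, (L.mulVec (B i)) j * y j := by
      have h2 := Matrix.dotProduct_mulVec (B i : Fin n → ℝ) L y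
      have h3 : Matrix.vecMul (B i : Fin n → ℝ) L = L.mulVec (B i) := by
        rw [← Matrix.mulVec_transpose]
        congr 1
      rw [h3] at h2
      exact h2
    rw [h1, hB, Finset.mul_sum]
    refine Finset.sum_congr rfl fun j _ => ?_
    simp [mul_assoc]
  refine ⟨C, fun y => ⟨hnorm y, ?_⟩⟩
  -- polarization
  have h1 := hnorm (y + L.mulVec y)
  have h2 := hnorm (y - L.mulVec y)
  simp only [map_add, map_sub, Pi.add_apply, Pi.sub_apply, hLC] at h1 h2
  have e1 : ∑ i, lam i * C y i ^ 2 = (∑ i, (C y i + lam i * C y i) ^ 2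
      - ∑ i, (C y i - lam i * C y i) ^ 2) / 4 := by
    rw [← Finset.sum_sub_distrib, Finset.sum_div]
    exact Finset.sum_congr rfl fun i _ => by ring
  have e2 : ∑ i, y i * (L.mulVec y) i = (∑ i, (y i + L.mulVec y i) ^ 2
      - ∑ i, (y i - L.mulVec y i) ^ 2) / 4 := by
    rw [← Finset.sum_sub_distrib, Finset.sum_div]
    exact Finset.sum_congr rfl fun i _ => by ring
  rw [e1, e2, h1, h2]

theorem sp_herm (G : SimpleGraph (Fin n)) [DecidableRel G.Adj] : (normLap G).IsHermitian := by
  unfold normLap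
  ext i j
  simp only [Matrix.conjTranspose_apply, Matrix.sub_apply, Matrix.of_apply, star_trivial,
    Matrix.one_apply, G.adj_comm i j, eq_comm, mul_comm]

theorem sp_deg (G : SimpleGraph (Fin n)) [DecidableRel G.Adj] (i : Fin n) :
    (∑ j, if G.Adj i j then (1 : ℝ) else 0) = degR G i := by
  unfold degR
  rw [← G.card_neighborFinset_eq_degree, G.neighborFinset_eq_filter, Finset.sum_boole]

theorem sp_sym (G : SimpleGraph (Fin n)) [DecidableRel G.Adj] (u : Fin n → ℝ) :
    (∑ i, ∑ j, if G.Adj i j then u i else 0) = ∑ i, degR G i * u i ∧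
    (∑ i, ∑ j, if G.Adj i j then u j else 0) = ∑ i, degR G i * u i := by
  have h1 : (∑ i, ∑ j, if G.Adj i j then u i else 0) = ∑ i, degR G i * u i := by
    refine Finset.sum_congr rfl fun i _ => ?_
    rw [← sp_deg, Finset.sum_mul]
    exact Finset.sum_congr rfl fun j _ => by split_ifs <;> simp
  refine ⟨h1, ?_⟩
  rw [Finset.sum_comm, ← h1]
  simp only [G.adj_comm]

theorem sp_spec (G : SimpleGraph (Fin n)) [DecidableRel G.Adj]
    (hiso : ∀ i, 0 < G.degree i)
    (lam : Fin n → ℝ) (hmono : Monotone lam)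
    (hroots : Finset.univ.val.map lam = (normLap G).charpoly.roots) :
    ∃ C : (Fin n → ℝ) ≃ₗ[ℝ] (Fin n → ℝ), ∀ x,
      (∑ i, C x i ^ 2 = ∑ i, degR G i * x i ^ 2) ∧
      ∑ i, (2 - lam i) * C x i ^ 2 = (∑ i, ∑ j, if G.Adj i j then (x i + x j) ^ 2 else 0) / 2 := by
  obtain ⟨C, hC⟩ := sp_diag (normLap G) (sp_herm G) lam hmono hroots
  have hd : ∀ i, 0 < degR G i := fun i => by unfold degR; exact_mod_cast hiso i
  have hs : ∀ i, 0 < Real.sqrt (degR G i) := fun i => Real.sqrt_pos.2 (hd i)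
  let D : (Fin n → ℝ) ≃ₗ[ℝ] (Fin n → ℝ) :=
    LinearEquiv.piCongrRight fun i => LinearEquiv.smulOfNeZero ℝ ℝ (Real.sqrt (degR G i)) (hs i).ne'
  have hD : ∀ x i, D x i = Real.sqrt (degR G i) * x i := fun x i => rfl
  have hD2 : ∀ x i, D x i ^ 2 = degR G i * x i ^ 2 := by
    intro x i
    rw [hD, mul_pow, Real.sq_sqrt (hd i).le]
  refine ⟨D ≪≫ₗ C, fun x => ?_⟩
  simp only [LinearEquiv.trans_apply]
  obtain ⟨h1, h2⟩ := hC (D x)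
  simp only [hD2] at h1
  refine ⟨h1, ?_⟩
  have e1 : ∑ i, (2 - lam i) * C (D x) i ^ 2
      = 2 * ∑ i, degR G i * x i ^ 2 - ∑ i, D x i * (normLap G).mulVec (D x) i := by
    rw [← h1, ← h2, Finset.mul_sum, ← Finset.sum_sub_distrib]
    exact Finset.sum_congr rfl fun i _ => by ring
  have e2 : ∀ i, D x i * (normLap G).mulVec (D x) i = degR G i * x i ^ 2
      - ∑ j, if G.Adj i j then x i * x j else 0 := by
    intro i
    unfold normLap
    rw [Matrix.sub_mulVec, Matrix.one_mulVec, Pi.sub_apply, mul_sub, ← pow_two, hD2]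
    congr 1
    simp only [Matrix.mulVec, dotProduct, Matrix.of_apply, Finset.mul_sum, hD]
    refine Finset.sum_congr rfl fun j _ => ?_
    split_ifs
    · have := (hs i).ne'
      have := (hs j).ne'
      field_simp
    · simp
  rw [e1]
  simp only [e2]
  rw [Finset.sum_sub_distrib]
  have e3 : (∑ i, ∑ j, if G.Adj i j then (x i + x j) ^ 2 else 0)
      = (∑ i, ∑ j, if G.Adj i j then x i ^ 2 else 0) + (∑ i, ∑ j, if G.Adj i j then x j ^ 2 else 0)
        + 2 * ∑ i, ∑ j, if G.Adj i j then x i * x j else 0 := by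
    simp only [Finset.mul_sum, ← Finset.sum_add_distrib]
    refine Finset.sum_congr rfl fun i _ => Finset.sum_congr rfl fun j _ => ?_
    split_ifs
    · ring
    · simp
  rw [e3, (sp_sym G fun i => x i ^ 2).1, (sp_sym G fun i => x i ^ 2).2]
  ring

/-- The odd homeomorphism `t ↦ t|t|`, coordinatewise. -/
def sqm (x : Fin n → ℝ) : Fin n → ℝ := fun i => x i * |x i|

def sqi (x : Fin n → ℝ) : Fin n → ℝ := fun i => Real.sqrt (x i) - Real.sqrt (- x i)

theorem sqm_cont : Continuous (sqm : (Fin n → ℝ) → _) := by unfold sqm; fun_prop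

theorem sqi_cont : Continuous (sqi : (Fin n → ℝ) → _) := by unfold sqi; fun_prop

theorem sqm_neg (x : Fin n → ℝ) : sqm (-x) = - sqm x := by
  funext i; simp [sqm]

theorem sqi_neg (x : Fin n → ℝ) : sqi (-x) = - sqi x := by
  funext i; simp [sqi]

theorem sqm_sqi (x : Fin n → ℝ) : sqm (sqi x) = x := by
  funext i
  simp only [sqm, sqi]
  rcases le_total 0 (x i) with h | h
  · rw [Real.sqrt_eq_zero_of_nonpos (by linarith : -x i ≤ 0), sub_zero,
      abs_of_nonneg (Real.sqrt_nonneg _), Real.mul_self_sqrt h]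
  · rw [Real.sqrt_eq_zero_of_nonpos h, zero_sub, abs_neg, abs_of_nonneg (Real.sqrt_nonneg _),
      neg_mul, Real.mul_self_sqrt (by linarith)]
    ring

theorem sqm_zero {x : Fin n → ℝ} (h : sqm x = 0) : x = 0 := by
  funext i
  have := congrFun h i
  simpa [sqm] using this

theorem sqm_abs (x : Fin n → ℝ) (i : Fin n) : |sqm x i| = x i ^ 2 := by
  simp [sqm, abs_mul, pow_two]

theorem sq_lower (a b : ℝ) : (a + b) ^ 2 ≤ 2 * |(a * |a| + b * |b|)| := by
  have h1 := le_abs_self (a * |a| + b * |b|)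
  have h2 := neg_le_abs (a * |a| + b * |b|)
  rcases le_total 0 a with ha | ha <;> rcases le_total 0 b with hb | hb
  · rw [abs_of_nonneg ha, abs_of_nonneg hb] at *
    nlinarith [sq_nonneg (a - b)]
  · rw [abs_of_nonneg ha, abs_of_nonpos hb] at *
    rcases le_total 0 (a + b) with h | h
    · nlinarith [mul_nonneg h (neg_nonneg.2 hb), sq_nonneg (a + b)]
    · nlinarith [mul_nonneg (neg_nonneg.2 h) ha, sq_nonneg (a + b)]
  · rw [abs_of_nonpos ha, abs_of_nonneg hb] at *
    rcases le_total 0 (a + b) with h | h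
    · nlinarith [mul_nonneg h (neg_nonneg.2 ha), sq_nonneg (a + b)]
    · nlinarith [mul_nonneg (neg_nonneg.2 h) hb, sq_nonneg (a + b)]
  · rw [abs_of_nonpos ha, abs_of_nonpos hb] at *
    nlinarith [sq_nonneg (a - b)]

theorem sq_upper (a b : ℝ) : |(a * |a| + b * |b|)| ≤ |a + b| * (|a| + |b|) := by
  rcases le_total 0 a with ha | ha <;> rcases le_total 0 b with hb | hb
  · rw [abs_of_nonneg ha, abs_of_nonneg hb, abs_of_nonneg (add_nonneg ha hb),
      abs_of_nonneg (by positivity)]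
    nlinarith [mul_nonneg ha hb]
  · rw [abs_of_nonneg ha, abs_of_nonpos hb, ← abs_of_nonneg (by linarith : 0 ≤ a + -b), ← abs_mul]
    exact le_of_eq (by congr 1; ring)
  · rw [abs_of_nonpos ha, abs_of_nonneg hb, ← abs_of_nonneg (by linarith : 0 ≤ -a + b), ← abs_mul]
    exact le_of_eq (by congr 1; ring)
  · rw [abs_of_nonpos ha, abs_of_nonpos hb, abs_of_nonpos (by linarith : a + b ≤ 0),
      abs_of_nonpos (by nlinarith)]
    nlinarith [mul_nonneg_of_nonpos_of_nonpos ha hb]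

theorem degR_nonneg (G : SimpleGraph (Fin n)) [DecidableRel G.Adj] (i : Fin n) : 0 ≤ degR G i :=
  Nat.cast_nonneg _

theorem Iplus_nonneg (G : SimpleGraph (Fin n)) [DecidableRel G.Adj] (x : Fin n → ℝ) :
    0 ≤ IplusU G x := by
  unfold IplusU
  refine div_nonneg (Finset.sum_nonneg fun i _ => Finset.sum_nonneg fun j _ => ?_) (by norm_num)
  split_ifs
  · exact abs_nonneg _
  · exact le_rfl

theorem den_nonneg (G : SimpleGraph (Fin n)) [DecidableRel G.Adj] (x : Fin n → ℝ) :
    0 ≤ ∑ i, degR G i * |x i| :=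
  Finset.sum_nonneg fun i _ => mul_nonneg (degR_nonneg G i) (abs_nonneg _)

theorem ray_nonneg (G : SimpleGraph (Fin n)) [DecidableRel G.Adj] (x : Fin n → ℝ) :
    0 ≤ RayleighPlus G x := div_nonneg (Iplus_nonneg G x) (den_nonneg G x)

theorem ray_le_one (G : SimpleGraph (Fin n)) [DecidableRel G.Adj] (x : Fin n → ℝ) :
    RayleighPlus G x ≤ 1 := by
  refine div_le_one_of_le₀ ?_ (den_nonneg G x)
  unfold IplusU
  have h : (∑ i, ∑ j, if G.Adj i j then |x i + x j| else 0) ≤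
      (∑ i, ∑ j, if G.Adj i j then |x i| else 0) + ∑ i, ∑ j, if G.Adj i j then |x j| else 0 := by
    simp only [← Finset.sum_add_distrib]
    refine Finset.sum_le_sum fun i _ => Finset.sum_le_sum fun j _ => ?_
    split_ifs
    · exact abs_add_le _ _
    · simp
  rw [(sp_sym G fun i => |x i|).1, (sp_sym G fun i => |x i|).2] at h
  linarith

theorem ray_lower (G : SimpleGraph (Fin n)) [DecidableRel G.Adj] (x : Fin n → ℝ) (μ : ℝ)
    (hN : 0 < ∑ i, degR G i * x i ^ 2)
    (hQ : μ * ∑ i, degR G i * x i ^ 2 ≤ (∑ i, ∑ j, if G.Adj i j then (x i + x j) ^ 2 else 0) / 2) :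
    μ / 2 ≤ RayleighPlus G (sqm x) := by
  unfold RayleighPlus
  simp only [sqm_abs]
  rw [le_div_iff₀ hN]
  have h : (∑ i, ∑ j, if G.Adj i j then (x i + x j) ^ 2 else 0) ≤
      2 * ∑ i, ∑ j, if G.Adj i j then |sqm x i + sqm x j| else 0 := by
    simp only [Finset.mul_sum]
    refine Finset.sum_le_sum fun i _ => Finset.sum_le_sum fun j _ => ?_
    split_ifs
    · exact sq_lower _ _
    · simp
  unfold IplusU
  linarith

theorem ray_upper (G : SimpleGraph (Fin n)) [DecidableRel G.Adj] (x : Fin n → ℝ) (μ : ℝ)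
    (hμ : 0 ≤ μ)
    (hQ : (∑ i, ∑ j, if G.Adj i j then (x i + x j) ^ 2 else 0) / 2 ≤ μ * ∑ i, degR G i * x i ^ 2) :
    RayleighPlus G (sqm x) ≤ Real.sqrt (2 * μ) := by
  unfold RayleighPlus
  simp only [sqm_abs]
  set N := ∑ i, degR G i * x i ^ 2 with hNdef
  have hN : 0 ≤ N := Finset.sum_nonneg fun i _ => mul_nonneg (degR_nonneg G i) (sq_nonneg _)
  refine div_le_of_le_mul₀ hN (Real.sqrt_nonneg _) ?_
  have h1 : (∑ i, ∑ j, if G.Adj i j then |sqm x i + sqm x j| else 0) ≤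
      ∑ i, ∑ j, (if G.Adj i j then |x i + x j| else 0) * (if G.Adj i j then (|x i| + |x j|) else 0) := by
    refine Finset.sum_le_sum fun i _ => Finset.sum_le_sum fun j _ => ?_
    split_ifs
    · exact sq_upper _ _
    · simp
  have h2 : (∑ i, ∑ j, (if G.Adj i j then |x i + x j| else 0) *
      (if G.Adj i j then (|x i| + |x j|) else 0)) ^ 2 ≤
      (∑ i, ∑ j, if G.Adj i j then (x i + x j) ^ 2 else 0) *
      (∑ i, ∑ j, if G.Adj i j then (|x i| + |x j|) ^ 2 else 0) := by
    have := Finset.sum_mul_sq_le_sq_mul_sq (Finset.univ ×ˢ Finset.univ : Finset (Fin n × Fin n))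
      (fun p => if G.Adj p.1 p.2 then |x p.1 + x p.2| else 0)
      (fun p => if G.Adj p.1 p.2 then |x p.1| + |x p.2| else 0)
    rw [Finset.sum_product, Finset.sum_product, Finset.sum_product] at this
    simpa [ite_pow] using this
  have h3 : (∑ i, ∑ j, if G.Adj i j then (|x i| + |x j|) ^ 2 else 0) ≤
      2 * ((∑ i, ∑ j, if G.Adj i j then x i ^ 2 else 0) +
        ∑ i, ∑ j, if G.Adj i j then x j ^ 2 else 0) := by
    simp only [← Finset.sum_add_distrib, Finset.mul_sum]
    refine Finset.sum_le_sum fun i _ => Finset.sum_le_sum fun j _ => ?_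
    split_ifs
    · nlinarith [sq_nonneg (|x i| - |x j|), sq_abs (x i), sq_abs (x j)]
    · simp
  rw [(sp_sym G fun i => x i ^ 2).1, (sp_sym G fun i => x i ^ 2).2] at h3
  have hI := Iplus_nonneg G (sqm x)
  have hS : IplusU G (sqm x) * 2 =
      ∑ i, ∑ j, if G.Adj i j then |sqm x i + sqm x j| else 0 := by
    unfold IplusU; ring
  rw [← hS] at h1
  have hQ0 : 0 ≤ ∑ i, ∑ j, if G.Adj i j then (x i + x j) ^ 2 else 0 :=
    Finset.sum_nonneg fun i _ => Finset.sum_nonneg fun j _ => by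
      split_ifs
      · positivity
      · exact le_rfl
  have h4 := pow_le_pow_left₀ (by linarith) h1 2
  have h5 := mul_le_mul_of_nonneg_left h3 hQ0
  have h6 := mul_le_mul_of_nonneg_right hQ hN
  refine (pow_le_pow_iff_left₀ hI (mul_nonneg (Real.sqrt_nonneg _) hN) two_ne_zero).1 ?_
  rw [mul_pow, Real.sq_sqrt (by linarith)]
  rw [← hNdef] at h5
  nlinarith

/-- Extension by zero into the last coordinates. -/
def extC (n k m : ℕ) (hkm : k = m + 1) (hkn : k ≤ n) (c : Fin (m + 1) → ℝ) : Fin n → ℝ :=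
  fun i => if h : n - k ≤ i.1 then c ⟨i.1 - (n - k), by omega⟩ else 0

theorem extC_cont (n k m : ℕ) (hkm : k = m + 1) (hkn : k ≤ n) :
    Continuous (extC n k m hkm hkn) := by
  refine continuous_pi fun i => ?_
  unfold extC
  by_cases h : n - k ≤ i.1
  · simp only [h, dif_pos]; fun_prop
  · simp only [h, dif_neg, not_false_eq_true]; fun_prop

theorem extC_neg (n k m : ℕ) (hkm : k = m + 1) (hkn : k ≤ n) (c : Fin (m + 1) → ℝ) :
    extC n k m hkm hkn (-c) = - extC n k m hkm hkn c := by
  funext i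
  by_cases h : n - k ≤ i.1 <;> simp [extC, h]

theorem extC_zero (n k m : ℕ) (hkm : k = m + 1) (hkn : k ≤ n) (c : Fin (m + 1) → ℝ)
    (h0 : extC n k m hkm hkn c = 0) : c = 0 := by
  funext j
  have h := congrFun h0 ⟨n - k + j.1, by omega⟩
  simpa [extC] using h

theorem genus_image (m k : ℕ) (hkm : k = m + 1) (Psi : (Fin (m + 1) → ℝ) → (Fin n → ℝ))
    (hc : Continuous Psi) (hodd : ∀ c, Psi (-c) = - Psi c) :
    GenusGe (Psi '' buSurf m) k := by
  rintro j ⟨f, hf, hfo, hf0⟩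
  by_contra hlt
  have hj : j ≤ m := by omega
  obtain ⟨c, hcm, hc0⟩ := bu_main m
    (fun c i => if h : i.1 < j then f (Psi c) ⟨i.1, h⟩ else 0) (by
      refine continuousOn_pi.2 fun i => ?_
      by_cases h : i.1 < j
      · simp only [h, dif_pos]
        have h1 : ContinuousOn (fun c => f (Psi c)) (buSurf m) :=
          hf.comp hc.continuousOn fun c hcc => ⟨c, hcc, rfl⟩
        exact (continuousOn_pi.1 h1) _
      · simp only [h, dif_neg, not_false_eq_true]; exact continuousOn_const) (by
      intro c hcm
      funext i
      by_cases h : i.1 < j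
      · simp only [h, dif_pos, Pi.neg_apply]
        rw [hodd, hfo _ ⟨c, hcm, rfl⟩]; rfl
      · simp [h])
  refine hf0 _ ⟨c, hcm, rfl⟩ ?_
  funext i
  have h := congrFun hc0 ⟨i.1, by omega⟩
  simpa using h

theorem stmt9 (G : SimpleGraph (Fin n)) [DecidableRel G.Adj]
    (hiso : ∀ i, 0 < G.degree i)
    (lam : Fin n → ℝ) (hmono : Monotone lam)
    (hroots : Finset.univ.val.map lam = (normLap G).charpoly.roots)
    (k : ℕ) (hk : 1 ≤ k) (hkn : k ≤ n) :
    (ckSignless G k) ^ 2 / 2 ≤ 2 - lam ⟨n - k, by omega⟩ ∧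
      2 - lam ⟨n - k, by omega⟩ ≤ 2 * ckSignless G k := by
  obtain ⟨m, hkm⟩ : ∃ m, k = m + 1 := ⟨k - 1, by omega⟩
  obtain ⟨C, hC⟩ := sp_spec G hiso lam hmono hroots
  have hlt : n - k < n := by omega
  have hCc : Continuous C := LinearMap.continuous_of_finiteDimensional C.toLinearMap
  have hCs : Continuous C.symm := LinearMap.continuous_of_finiteDimensional C.symm.toLinearMap
  set μ : ℝ := 2 - lam ⟨n - k, hlt⟩ with hμdef
  have hμ : 0 ≤ μ := by
    have h := (hC (C.symm (Pi.single ⟨n - k, hlt⟩ 1))).2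
    rw [LinearEquiv.apply_symm_apply] at h
    have h1 : ∑ i, (2 - lam i) * (Pi.single (⟨n - k, hlt⟩ : Fin n) (1 : ℝ) : Fin n → ℝ) i ^ 2 = μ := by
      rw [Finset.sum_eq_single (⟨n - k, hlt⟩ : Fin n)]
      · simp [hμdef]
      · intro b _ hb
        simp [Pi.single_eq_of_ne hb]
      · simp
    rw [h1] at h
    rw [h]
    refine div_nonneg (Finset.sum_nonneg fun i _ => Finset.sum_nonneg fun j _ => ?_) (by norm_num)
    split_ifs
    · positivity
    · exact le_rfl
  let Psi : (Fin (m + 1) → ℝ) → (Fin n → ℝ) := fun c => sqm (C.symm (extC n k m hkm hkn c))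
  have hPc : Continuous Psi := sqm_cont.comp (hCs.comp (extC_cont n k m hkm hkn))
  have hPo : ∀ c, Psi (-c) = - Psi c := fun c => by
    simp only [Psi, extC_neg, map_neg, sqm_neg]
  have hA1 : IsCompact (Psi '' buSurf m) := (buSurf_compact m).image hPc
  have hA2 : ∀ x ∈ Psi '' buSurf m, -x ∈ Psi '' buSurf m := by
    rintro _ ⟨c, hc, rfl⟩
    exact ⟨-c, buSurf_neg hc, hPo c⟩
  have hA3 : (0 : Fin n → ℝ) ∉ Psi '' buSurf m := by
    rintro ⟨c, hc, h0⟩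
    have h1 := sqm_zero h0
    have h2 : extC n k m hkm hkn c = 0 := by simpa using h1
    exact bu_zero_notMem m (extC_zero n k m hkm hkn c h2 ▸ hc)
  have hA4 : GenusGe (Psi '' buSurf m) k := genus_image m k hkm Psi hPc hPo
  have hbdd : BddBelow {r : ℝ | ∃ A : Set (Fin n → ℝ), IsCompact A ∧ (∀ x ∈ A, -x ∈ A) ∧
      (0 : Fin n → ℝ) ∉ A ∧ GenusGe A k ∧ r = sSup (RayleighPlus G '' A)} := by
    refine ⟨0, ?_⟩
    rintro _ ⟨A, _, _, _, _, rfl⟩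
    refine Real.sSup_nonneg ?_
    rintro _ ⟨x, _, rfl⟩
    exact ray_nonneg G x
  constructor
  · have hle : ckSignless G k ≤ Real.sqrt (2 * μ) := by
      refine (csInf_le hbdd ⟨_, hA1, hA2, hA3, hA4, rfl⟩).trans ?_
      refine csSup_le (((buSurf_nonempty m).image Psi).image _) ?_
      rintro _ ⟨_, ⟨c, hc, rfl⟩, rfl⟩
      refine ray_upper G _ μ hμ ?_
      have h := hC (C.symm (extC n k m hkm hkn c))
      rw [← h.1, ← h.2, LinearEquiv.apply_symm_apply, Finset.mul_sum]
      refine Finset.sum_le_sum fun i _ => ?_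
      by_cases hi : n - k ≤ i.1
      · refine mul_le_mul_of_nonneg_right ?_ (sq_nonneg _)
        have : lam ⟨n - k, hlt⟩ ≤ lam i := hmono (Fin.le_def.2 hi)
        linarith
      · simp [extC, hi]
    have h0 : 0 ≤ ckSignless G k := by
      refine Real.sInf_nonneg ?_
      rintro _ ⟨A, _, _, _, _, rfl⟩
      refine Real.sSup_nonneg ?_
      rintro _ ⟨x, _, rfl⟩
      exact ray_nonneg G x
    have h1 := pow_le_pow_left₀ h0 hle 2
    rw [Real.sq_sqrt (by linarith)] at h1
    linarith
  · have hge : μ / 2 ≤ ckSignless G k := by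
      refine le_csInf ⟨_, _, hA1, hA2, hA3, hA4, rfl⟩ ?_
      rintro _ ⟨A, _, _, hz, hg, rfl⟩
      obtain ⟨x, hxA, hx⟩ : ∃ x ∈ A, ∀ i : Fin n, n - k < i.1 → C (sqi x) i = 0 := by
        by_contra hcon
        push Not at hcon
        have : k ≤ m := hg m ⟨fun x i => C (sqi x) ⟨n - k + 1 + i.1, by omega⟩, by
          refine Continuous.continuousOn (continuous_pi fun i => ?_)
          exact (continuous_apply _).comp (hCc.comp sqi_cont), by
          intro x _
          funext i
          simp [sqi_neg], by
          intro x hxA h0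
          obtain ⟨i, hi, hne⟩ := hcon x hxA
          apply hne
          have h := congrFun h0 ⟨i.1 - (n - k + 1), by omega⟩
          have e : (⟨n - k + 1 + (i.1 - (n - k + 1)), by omega⟩ : Fin n) = i := by
            apply Fin.ext; simp only; omega
          simp only [e] at h
          exact h⟩
        omega
      have hzne : C (sqi x) ≠ 0 := by
        intro h0
        have h1 : sqi x = 0 := by simpa using h0
        have h2 := sqm_sqi x
        rw [h1] at h2
        apply hz
        have h3 : sqm (0 : Fin n → ℝ) = 0 := by funext i; simp [sqm]
        rw [h3] at h2
        exact h2 ▸ hxA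
      have h := hC (sqi x)
      have hr : μ / 2 ≤ RayleighPlus G x := by
        have := ray_lower G (sqi x) μ (by
          rw [← h.1]
          obtain ⟨i, hi⟩ := Function.ne_iff.1 hzne
          exact Finset.sum_pos' (fun i _ => sq_nonneg _) ⟨i, Finset.mem_univ _, by
            have : C (sqi x) i ≠ 0 := hi
            positivity⟩) (by
          rw [← h.1, ← h.2, Finset.mul_sum]
          refine Finset.sum_le_sum fun i _ => ?_
          by_cases hi : n - k < i.1
          · simp [hx i hi]
          · refine mul_le_mul_of_nonneg_right ?_ (sq_nonneg _)
            have : lam i ≤ lam ⟨n - k, hlt⟩ := hmono (Fin.le_def.2 (by simpa using hi))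
            linarith)
        rwa [sqm_sqi] at this
      refine hr.trans (le_csSup ⟨1, ?_⟩ ⟨x, hxA, rfl⟩)
      rintro _ ⟨y, _, rfl⟩
      exact ray_le_one G y
    linarith
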